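/- arXiv:0808.1714 — 5 statements merged into one kernel-verified Lean document; each statement's English description precedes it below -/
import Mathlib

section
/- For every n, the space of trilinear forms T on ℝⁿ that are antisymmetric in the first two arguments (i.e. T(X,Y,Z) = −T(Y,X,Z)) decomposes as the internal direct sum Vec ⊕ 𝒜 ⊕ Alt of the three subspaces Vec, 𝒜, Alt defined below; moreover the kernel of the Bianchi map 𝔟 equals Vec ⊕ 𝒜 and the kernel of the trace map c equals 𝒜 ⊕ Alt. -/
/-!
Up to nonzero factors, the Bianchi map retracts the torsion tensors onto `Alt`: it sends them into
`Alt` and is multiplication by `3` there. Likewise `c(T_ν) = (n - 1) ν`, so for `n ≠ 1` the map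
`ν ↦ T_ν` splits `c`, while for `n = 1` every torsion tensor vanishes. Hence, inside the torsion
tensors, `ker 𝔟` complements `Alt` and `ker c` complements `Vec`. As `Vec ⊆ ker 𝔟` and
`Alt ⊆ ker c`, the rest is the modular law in the lattice of subspaces.
-/

noncomputable section

set_option maxSynthPendingDepth 3

/-- Euclidean `n`-space `ℝⁿ`. -/
abbrev V (n : ℕ) := Fin n → ℝ

/-- Trilinear forms on `ℝⁿ`. -/
abbrev Tri (n : ℕ) := V n →ₗ[ℝ] V n →ₗ[ℝ] V n →ₗ[ℝ] ℝ

/-- The standard inner product on `ℝⁿ`. -/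
def inn {n : ℕ} (X Y : V n) : ℝ := ∑ i, X i * Y i

/-- The standard orthonormal basis of `ℝⁿ`. -/
def stdB {n : ℕ} (i : Fin n) : V n := Pi.single i 1

/-- Torsion tensors: trilinear forms antisymmetric in the first two arguments. -/
def Torsion (n : ℕ) : Submodule ℝ (Tri n) where
  carrier := {T | ∀ X Y Z, T X Y Z = - T Y X Z}
  zero_mem' := by intro X Y Z; simp
  add_mem' := by
    intro T S hT hS X Y Z
    simp only [LinearMap.add_apply]
    linear_combination hT X Y Z + hS X Y Z
  smul_mem' := by
    intro c T hT X Y Z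
    simp only [LinearMap.smul_apply, smul_eq_mul]
    linear_combination c * hT X Y Z

/-- The kernel of the Bianchi map `𝔟(T)(X,Y,Z) = T(X,Y,Z) + T(Y,Z,X) + T(Z,X,Y)`. -/
def kerBianchi (n : ℕ) : Submodule ℝ (Tri n) where
  carrier := {T | ∀ X Y Z, T X Y Z + T Y Z X + T Z X Y = 0}
  zero_mem' := by intro X Y Z; simp
  add_mem' := by
    intro T S hT hS X Y Z
    simp only [LinearMap.add_apply]
    linear_combination hT X Y Z + hS X Y Z
  smul_mem' := by
    intro c T hT X Y Z
    simp only [LinearMap.smul_apply, smul_eq_mul]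
    linear_combination c * hT X Y Z

/-- The kernel of the trace map `c(T)(X) = Σⱼ T(X,eⱼ,eⱼ)`. -/
def kerTrace (n : ℕ) : Submodule ℝ (Tri n) where
  carrier := {T | ∀ X, ∑ j, T X (stdB j) (stdB j) = 0}
  zero_mem' := by intro X; simp
  add_mem' := by
    intro T S hT hS X
    simp only [LinearMap.add_apply, Finset.sum_add_distrib]
    rw [hT X, hS X]; ring
  smul_mem' := by
    intro c T hT X
    simp only [LinearMap.smul_apply, smul_eq_mul, ← Finset.mul_sum]
    rw [hT X, mul_zero]

/-- The vectorial component: tensors `T_ν(X,Y,Z) = ν(X)⟨Y,Z⟩ − ν(Y)⟨X,Z⟩`. -/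
def VecT (n : ℕ) : Submodule ℝ (Tri n) where
  carrier := {T | ∃ ν : V n →ₗ[ℝ] ℝ, ∀ X Y Z,
      T X Y Z = ν X * inn Y Z - ν Y * inn X Z}
  zero_mem' := ⟨0, by intro X Y Z; simp⟩
  add_mem' := by
    rintro T S ⟨ν, hν⟩ ⟨ρ, hρ⟩
    refine ⟨ν + ρ, fun X Y Z => ?_⟩
    simp only [LinearMap.add_apply]
    linear_combination hν X Y Z + hρ X Y Z
  smul_mem' := by
    rintro c T ⟨ν, hν⟩
    refine ⟨c • ν, fun X Y Z => ?_⟩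
    simp only [LinearMap.smul_apply, smul_eq_mul]
    linear_combination c * hν X Y Z

/-- The totally alternating trilinear forms. -/
def AltT (n : ℕ) : Submodule ℝ (Tri n) where
  carrier := {T | (∀ X Y Z, T X Y Z = - T Y X Z) ∧ (∀ X Y Z, T X Y Z = - T X Z Y)}
  zero_mem' := ⟨by intro X Y Z; simp, by intro X Y Z; simp⟩
  add_mem' := by
    rintro T S ⟨hT1, hT2⟩ ⟨hS1, hS2⟩
    constructor
    · intro X Y Z
      simp only [LinearMap.add_apply]
      linear_combination hT1 X Y Z + hS1 X Y Z
    · intro X Y Z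
      simp only [LinearMap.add_apply]
      linear_combination hT2 X Y Z + hS2 X Y Z
  smul_mem' := by
    rintro c T ⟨hT1, hT2⟩
    constructor
    · intro X Y Z
      simp only [LinearMap.smul_apply, smul_eq_mul]
      linear_combination c * hT1 X Y Z
    · intro X Y Z
      simp only [LinearMap.smul_apply, smul_eq_mul]
      linear_combination c * hT2 X Y Z

/-- The Cartan component `𝒜 = ker 𝔟 ∩ ker c` (inside the torsion tensors). -/
def CartanA (n : ℕ) : Submodule ℝ (Tri n) := Torsion n ⊓ kerBianchi n ⊓ kerTrace n

lemma eq_sup_inf_of_le_of_le_sup {α : Type*} [Lattice α] [IsModularLattice α] {x y z : α}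
    (hxz : x ≤ z) (hz : z ≤ x ⊔ y) : z = x ⊔ z ⊓ y := by
  rw [inf_comm, ← sup_inf_assoc_of_le y hxz, inf_eq_right.2 hz]

lemma isCompl_range_ker_of_bijective_comp {R E F : Type*} [Ring R] [AddCommGroup E] [Module R E]
    [AddCommGroup F] [Module R F] {f : E →ₗ[R] F} {g : F →ₗ[R] E}
    (hfg : Function.Bijective (f ∘ₗ g)) : IsCompl (LinearMap.range g) (LinearMap.ker f) := by
  refine ⟨LinearMap.disjoint_ker.2 ?_,
    codisjoint_iff_le_sup.2 ((LinearMap.map_le_map_iff f).1 ?_)⟩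
  · rintro _ ⟨y, rfl⟩ hy
    rw [(map_eq_zero_iff _ hfg.injective).1 hy, map_zero]
  · rintro _ ⟨x, -, rfl⟩
    obtain ⟨y, hy⟩ := hfg.surjective (f x)
    exact ⟨g y, ⟨y, rfl⟩, hy⟩

section Trilinear

variable {R M N : Type*} [CommSemiring R] [AddCommMonoid M] [Module R M] [AddCommMonoid N]
  [Module R N]

/-- The rotation `T ↦ ((x, y, z) ↦ T(y, z, x))` of trilinear maps. -/
def rotate : (M →ₗ[R] M →ₗ[R] M →ₗ[R] N) →ₗ[R] M →ₗ[R] M →ₗ[R] M →ₗ[R] N :=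
  LinearMap.lflip.toLinearMap ∘ₗ LinearMap.compRight R LinearMap.lflip.toLinearMap

/-- The Bianchi map `𝔟`, for trilinear maps on any module. -/
def cyclicSum : (M →ₗ[R] M →ₗ[R] M →ₗ[R] N) →ₗ[R] M →ₗ[R] M →ₗ[R] M →ₗ[R] N :=
  LinearMap.id + rotate + rotate ∘ₗ rotate

lemma cyclicSum_apply (T : M →ₗ[R] M →ₗ[R] M →ₗ[R] N) (x y z : M) :
    cyclicSum T x y z = T x y z + T y z x + T z x y :=
  rfl

/-- The trace map `c`, as the contraction of the last two arguments of a trilinear map against a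
finite family `e`. -/
def contraction {ι : Type*} [Fintype ι] (e : ι → M) :
    (M →ₗ[R] M →ₗ[R] M →ₗ[R] N) →ₗ[R] M →ₗ[R] N :=
  LinearMap.compRight R (∑ j, LinearMap.applyₗ (e j) ∘ₗ LinearMap.applyₗ (e j))

lemma contraction_apply {ι : Type*} [Fintype ι] (e : ι → M)
    (T : M →ₗ[R] M →ₗ[R] M →ₗ[R] N) (x : M) :
    contraction e T x = ∑ j, T x (e j) (e j) := by
  simp [contraction]

end Trilinear

section Antisymmetric

variable {R M N : Type*} [CommSemiring R] [AddCommMonoid M] [Module R M] [AddCommGroup N]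
  [Module R N] {T : M →ₗ[R] M →ₗ[R] M →ₗ[R] N}

lemma cyclicSum_swap_left (h : ∀ x y z, T x y z = -T y x z) (x y z : M) :
    cyclicSum T x y z = -cyclicSum T y x z := by
  rw [cyclicSum_apply, cyclicSum_apply, h x y z, h y z x, h z x y]
  abel

lemma cyclicSum_swap_right (h : ∀ x y z, T x y z = -T y x z) (x y z : M) :
    cyclicSum T x y z = -cyclicSum T x z y := by
  rw [cyclicSum_apply, cyclicSum_apply, h x y z, h y z x, h z x y]
  abel

lemma cyclicSum_eq_three_smul (hleft : ∀ x y z, T x y z = -T y x z)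
    (hright : ∀ x y z, T x y z = -T x z y) : cyclicSum T = (3 : R) • T := by
  have hrotate (x y z : M) : T y z x = T x y z := by
    rw [hright y z x, hleft y x z, neg_neg]
  ext x y z
  rw [cyclicSum_apply, hrotate x y z, ← hrotate z x y]
  simp only [LinearMap.smul_apply]
  module

end Antisymmetric

section Vectorial

variable {R M : Type*} [CommRing R] [AddCommMonoid M] [Module R M]

/-- The map `ν ↦ T_ν`, with an arbitrary bilinear form `g` in place of the inner product. -/
def vectorial (g : M →ₗ[R] M →ₗ[R] R) : (M →ₗ[R] R) →ₗ[R] M →ₗ[R] M →ₗ[R] M →ₗ[R] R :=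
  (LinearMap.id - LinearMap.lflip.toLinearMap) ∘ₗ LinearMap.smulRightₗ.flip g

lemma vectorial_apply (g : M →ₗ[R] M →ₗ[R] R) (ν : M →ₗ[R] R) (x y z : M) :
    vectorial g ν x y z = ν x * g y z - ν y * g x z :=
  rfl

lemma cyclicSum_vectorial {g : M →ₗ[R] M →ₗ[R] R} (hg : ∀ x y, g x y = g y x) (ν : M →ₗ[R] R) :
    cyclicSum (vectorial g ν) = 0 := by
  ext x y z
  simp only [cyclicSum_apply, vectorial_apply, LinearMap.zero_apply]
  rw [hg z x, hg z y, hg y x]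
  ring

lemma contraction_comp_vectorial {ι : Type*} [Fintype ι] [DecidableEq ι] (b : Module.Basis ι R M)
    {g : M →ₗ[R] M →ₗ[R] R} (hg : ∀ i j, g (b i) (b j) = if i = j then 1 else 0) :
    contraction b ∘ₗ vectorial g = ((Fintype.card ι : R) - 1) • LinearMap.id := by
  refine LinearMap.ext fun ν => b.ext fun i => ?_
  simp [contraction_apply, vectorial_apply, hg, sub_mul]

end Vectorial

section Torsion

variable (n : ℕ)

lemma kerBianchi_eq_ker_cyclicSum : kerBianchi n = LinearMap.ker cyclicSum := by
  ext T
  simp only [LinearMap.mem_ker, LinearMap.ext_iff]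
  rfl

lemma kerTrace_eq_ker_contraction :
    kerTrace n = LinearMap.ker (contraction (N := ℝ) (Pi.basisFun ℝ (Fin n))) := by
  ext T
  simp only [LinearMap.mem_ker, LinearMap.ext_iff, contraction_apply, Pi.basisFun_apply]
  rfl

lemma vecT_eq_range_vectorial :
    VecT n = LinearMap.range (vectorial (dotProductBilin (m := Fin n) ℝ ℝ)) := by
  ext T
  simp only [LinearMap.mem_range, LinearMap.ext_iff, eq_comm (b := T _ _ _)]
  rfl

lemma vecT_le_torsion : VecT n ≤ Torsion n := by
  rintro T ⟨ν, hT⟩ X Y Z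
  rw [hT, hT, neg_sub]

lemma altT_le_torsion : AltT n ≤ Torsion n := fun _ hT => hT.1

lemma vecT_le_kerBianchi : VecT n ≤ kerBianchi n := by
  rw [vecT_eq_range_vectorial, kerBianchi_eq_ker_cyclicSum]
  rintro _ ⟨ν, rfl⟩
  exact cyclicSum_vectorial dotProduct_comm ν

lemma altT_le_kerTrace : AltT n ≤ kerTrace n := fun _ hT X =>
  Finset.sum_eq_zero fun j _ => self_eq_neg.1 (hT.2 X (stdB j) (stdB j))

lemma torsion_one_eq_bot : Torsion 1 = ⊥ := by
  refine (Submodule.eq_bot_iff _).2 fun T hT => ?_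
  ext i j k
  rw [Subsingleton.elim j i]
  exact self_eq_neg.1 (hT _ _ _)

variable {n} in
lemma isCompl_vecT_kerTrace (hn : n ≠ 1) : IsCompl (VecT n) (kerTrace n) := by
  rw [vecT_eq_range_vectorial, kerTrace_eq_ker_contraction]
  have hcard : (Fintype.card (Fin n) : ℝ) - 1 ≠ 0 := by
    rw [Fintype.card_fin]
    exact sub_ne_zero.2 (Nat.cast_ne_one.2 hn)
  have horthonormal (i j : Fin n) : dotProductBilin ℝ ℝ (Pi.basisFun ℝ (Fin n) i)
      (Pi.basisFun ℝ (Fin n) j) = if i = j then (1 : ℝ) else 0 := by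
    simp [Pi.single_apply, eq_comm]
  apply isCompl_range_ker_of_bijective_comp
  rw [contraction_comp_vectorial _ horthonormal]
  exact (LinearEquiv.smulOfNeZero ℝ _ _ hcard).bijective

lemma disjoint_vecT_kerTrace : Disjoint (VecT n) (kerTrace n) := by
  obtain rfl | hn := eq_or_ne n 1
  · rw [eq_bot_mono (vecT_le_torsion 1) torsion_one_eq_bot]
    exact disjoint_bot_left
  · exact (isCompl_vecT_kerTrace hn).disjoint

lemma torsion_le_vecT_sup_kerTrace : Torsion n ≤ VecT n ⊔ kerTrace n := by
  obtain rfl | hn := eq_or_ne n 1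
  · rw [torsion_one_eq_bot]
    exact bot_le
  · rw [(isCompl_vecT_kerTrace hn).sup_eq_top]
    exact le_top

lemma disjoint_altT_kerBianchi : Disjoint (AltT n) (kerBianchi n) := by
  rw [kerBianchi_eq_ker_cyclicSum, LinearMap.disjoint_ker]
  intro T hT hT0
  rwa [cyclicSum_eq_three_smul hT.1 hT.2, smul_eq_zero_iff_right three_ne_zero] at hT0

lemma torsion_le_altT_sup_kerBianchi : Torsion n ≤ AltT n ⊔ kerBianchi n := by
  rw [kerBianchi_eq_ker_cyclicSum, ← LinearMap.map_le_map_iff]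
  rintro _ ⟨T, hT, rfl⟩
  have hbT : cyclicSum T ∈ AltT n := ⟨cyclicSum_swap_left hT, cyclicSum_swap_right hT⟩
  refine ⟨(3⁻¹ : ℝ) • cyclicSum T, (AltT n).smul_mem _ hbT, ?_⟩
  rw [map_smul, cyclicSum_eq_three_smul hbT.1 hbT.2, inv_smul_smul₀ three_ne_zero]

lemma torsion_inf_kerBianchi : Torsion n ⊓ kerBianchi n = VecT n ⊔ CartanA n :=
  eq_sup_inf_of_le_of_le_sup (le_inf (vecT_le_torsion n) (vecT_le_kerBianchi n))
    (inf_le_left.trans (torsion_le_vecT_sup_kerTrace n))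

lemma torsion_inf_kerTrace : Torsion n ⊓ kerTrace n = CartanA n ⊔ AltT n := by
  rw [eq_sup_inf_of_le_of_le_sup (le_inf (altT_le_torsion n) (altT_le_kerTrace n))
    (inf_le_left.trans (torsion_le_altT_sup_kerBianchi n)), inf_right_comm, sup_comm, CartanA]

end Torsion

/-- for every `n`, the space of torsion tensors on `ℝⁿ` is the internal
direct sum `Vec ⊕ 𝒜 ⊕ Alt`; moreover the kernel of the Bianchi map equals `Vec ⊕ 𝒜`
and the kernel of the trace map equals `𝒜 ⊕ Alt`. -/
theorem cartan_decomposition (n : ℕ) :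
    (VecT n ⊔ CartanA n ⊔ AltT n = Torsion n) ∧
    (VecT n ⊓ (CartanA n ⊔ AltT n) = ⊥) ∧
    (CartanA n ⊓ (VecT n ⊔ AltT n) = ⊥) ∧
    (AltT n ⊓ (VecT n ⊔ CartanA n) = ⊥) ∧
    (Torsion n ⊓ kerBianchi n = VecT n ⊔ CartanA n) ∧
    (Torsion n ⊓ kerTrace n = CartanA n ⊔ AltT n) := by
  have hVec : Disjoint (VecT n) (CartanA n ⊔ AltT n) := by
    rw [← torsion_inf_kerTrace]
    exact (disjoint_vecT_kerTrace n).mono_right inf_le_right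
  have hAlt : Disjoint (AltT n) (VecT n ⊔ CartanA n) := by
    rw [← torsion_inf_kerBianchi]
    exact (disjoint_altT_kerBianchi n).mono_right inf_le_right
  have hCartan : Disjoint (CartanA n) (VecT n ⊔ AltT n) :=
    disjoint_sup_right_of_disjoint_sup_right (sup_comm (CartanA n) _ ▸ hVec)
      (sup_comm (VecT n) _ ▸ hAlt)
  have hsup : VecT n ⊔ CartanA n ⊔ AltT n = Torsion n := by
    rw [← torsion_inf_kerBianchi, sup_comm]
    exact (eq_sup_inf_of_le_of_le_sup (altT_le_torsion n) (torsion_le_altT_sup_kerBianchi n)).symm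
  exact ⟨hsup, hVec.eq_bot, hCartan.eq_bot, hAlt.eq_bot, torsion_inf_kerBianchi n,
    torsion_inf_kerTrace n⟩
end
end

section
/- In dimension 4, the subspaces 𝒜₊ and 𝒜₋ of the Cartan component 𝒜 each have dimension 8, and 𝒜 is the internal direct sum 𝒜₊ ⊕ 𝒜₋. -/
noncomputable section

set_option maxSynthPendingDepth 3

/-! ### Selfdual and anti-selfdual 2-forms on `ℝ⁴` -/

/-- The selfdual 2-form `e⁰∧e¹ + e²∧e³`. -/
def sd₁ (X Y : V 4) : ℝ := (X 0 * Y 1 - X 1 * Y 0) + (X 2 * Y 3 - X 3 * Y 2)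

/-- The selfdual 2-form `e⁰∧e² + e³∧e¹`. -/
def sd₂ (X Y : V 4) : ℝ := (X 0 * Y 2 - X 2 * Y 0) + (X 3 * Y 1 - X 1 * Y 3)

/-- The selfdual 2-form `e⁰∧e³ + e¹∧e²`. -/
def sd₃ (X Y : V 4) : ℝ := (X 0 * Y 3 - X 3 * Y 0) + (X 1 * Y 2 - X 2 * Y 1)

/-- The anti-selfdual 2-form `e⁰∧e¹ − e²∧e³`. -/
def asd₁ (X Y : V 4) : ℝ := (X 0 * Y 1 - X 1 * Y 0) - (X 2 * Y 3 - X 3 * Y 2)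

/-- The anti-selfdual 2-form `e⁰∧e² − e³∧e¹`. -/
def asd₂ (X Y : V 4) : ℝ := (X 0 * Y 2 - X 2 * Y 0) - (X 3 * Y 1 - X 1 * Y 3)

/-- The anti-selfdual 2-form `e⁰∧e³ − e¹∧e²`. -/
def asd₃ (X Y : V 4) : ℝ := (X 0 * Y 3 - X 3 * Y 0) - (X 1 * Y 2 - X 2 * Y 1)

/-- `𝒜₊`: members of `𝒜` such that for every `Z` the 2-form `(X,Y) ↦ T(X,Y,Z)` is
a combination of the selfdual forms. -/
def Aplus : Submodule ℝ (Tri 4) where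
  carrier := {T | T ∈ CartanA 4 ∧ ∀ Z, ∃ a b c : ℝ, ∀ X Y,
      T X Y Z = a * sd₁ X Y + b * sd₂ X Y + c * sd₃ X Y}
  zero_mem' := ⟨(CartanA 4).zero_mem, fun Z => ⟨0, 0, 0, by intro X Y; simp⟩⟩
  add_mem' := by
    rintro T S ⟨hT, hT'⟩ ⟨hS, hS'⟩
    refine ⟨(CartanA 4).add_mem hT hS, fun Z => ?_⟩
    obtain ⟨a, b, c, h⟩ := hT' Z
    obtain ⟨a', b', c', h'⟩ := hS' Z
    refine ⟨a + a', b + b', c + c', fun X Y => ?_⟩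
    simp only [LinearMap.add_apply]
    linear_combination h X Y + h' X Y
  smul_mem' := by
    rintro r T ⟨hT, hT'⟩
    refine ⟨(CartanA 4).smul_mem r hT, fun Z => ?_⟩
    obtain ⟨a, b, c, h⟩ := hT' Z
    refine ⟨r * a, r * b, r * c, fun X Y => ?_⟩
    simp only [LinearMap.smul_apply, smul_eq_mul]
    linear_combination r * h X Y

/-- `𝒜₋`: members of `𝒜` such that for every `Z` the 2-form `(X,Y) ↦ T(X,Y,Z)` is
a combination of the anti-selfdual forms. -/
def Aminus : Submodule ℝ (Tri 4) where
  carrier := {T | T ∈ CartanA 4 ∧ ∀ Z, ∃ a b c : ℝ, ∀ X Y,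
      T X Y Z = a * asd₁ X Y + b * asd₂ X Y + c * asd₃ X Y}
  zero_mem' := ⟨(CartanA 4).zero_mem, fun Z => ⟨0, 0, 0, by intro X Y; simp⟩⟩
  add_mem' := by
    rintro T S ⟨hT, hT'⟩ ⟨hS, hS'⟩
    refine ⟨(CartanA 4).add_mem hT hS, fun Z => ?_⟩
    obtain ⟨a, b, c, h⟩ := hT' Z
    obtain ⟨a', b', c', h'⟩ := hS' Z
    refine ⟨a + a', b + b', c + c', fun X Y => ?_⟩
    simp only [LinearMap.add_apply]
    linear_combination h X Y + h' X Y
  smul_mem' := by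
    rintro r T ⟨hT, hT'⟩
    refine ⟨(CartanA 4).smul_mem r hT, fun Z => ?_⟩
    obtain ⟨a, b, c, h⟩ := hT' Z
    refine ⟨r * a, r * b, r * c, fun X Y => ?_⟩
    simp only [LinearMap.smul_apply, smul_eq_mul]
    linear_combination r * h X Y

/-!
The Hodge star `⋆`, acting on the skew pair of a torsion tensor, is an involution. Moreover `c(⋆T)`
is the contraction of the alternating form `𝔟(T)` with the volume form, so `⋆` exchanges `ker 𝔟`
and `ker c` and thus preserves `𝒜`. Hence `𝒜` is the direct sum of its intersections with the
`±1`-eigenspaces of `⋆`, and these intersections are `𝒜₊` and `𝒜₋`.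

For an eigentensor of `⋆` the conditions `𝔟(T) = 0` and `c(T) = 0` are equivalent, so `𝒜₊` and
`𝒜₋` are the kernels of `c` on the eigenspaces `Λ²± ⊗ V*`, of dimension `3 · 4 = 12`. On each of
them `c` is onto `V*`: a vectorial tensor `T_ν` has `𝔟(T_ν) = 0`, hence `c(⋆T_ν) = 0`, and
`c(T_ν ± ⋆T_ν) = c(T_ν) = 3ν`. Both kernels therefore have dimension `12 - 4 = 8`.
-/

section LinearAlgebra

lemma finrank_map_add_finrank_inf_ker {K E F : Type*} [DivisionRing K] [AddCommGroup E]
    [Module K E] [AddCommGroup F] [Module K F] (p : Submodule K E)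
    [FiniteDimensional K p] (f : E →ₗ[K] F) :
    Module.finrank K (p.map f) + Module.finrank K ↥(p ⊓ LinearMap.ker f) =
      Module.finrank K p := by
  rw [← (f.domRestrict p).finrank_range_add_finrank_ker, LinearMap.range_domRestrict,
    LinearMap.ker_domRestrict, ← Submodule.map_comap_subtype, Submodule.finrank_map_subtype_eq]

variable {R M : Type*} [CommRing R] [AddCommGroup M] [Module R M]

lemma inf_eigenspace_one_sup_inf_eigenspace_neg_one [Invertible (2 : R)] {f : Module.End R M}
    {p : Submodule R M} (hmem : ∀ x ∈ p, f x ∈ p) (hinv : ∀ x ∈ p, f (f x) = x) :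
    p ⊓ f.eigenspace 1 ⊔ p ⊓ f.eigenspace (-1) = p := by
  refine le_antisymm (sup_le inf_le_left inf_le_left) fun x hx => ?_
  have hplus : ⅟(2 : R) • (x + f x) ∈ p ⊓ f.eigenspace 1 := by
    refine ⟨p.smul_mem _ (p.add_mem hx (hmem x hx)), Module.End.mem_eigenspace_iff.2 ?_⟩
    rw [map_smul, map_add, hinv x hx, add_comm, one_smul]
  have hminus : ⅟(2 : R) • (x - f x) ∈ p ⊓ f.eigenspace (-1) := by
    refine ⟨p.smul_mem _ (p.sub_mem hx (hmem x hx)), Module.End.mem_eigenspace_iff.2 ?_⟩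
    rw [map_smul, map_sub, hinv x hx, ← neg_sub, smul_neg, neg_one_smul]
  have hsum : ⅟(2 : R) • (x + f x) + ⅟(2 : R) • (x - f x) = x := by
    rw [← smul_add, add_add_sub_cancel, ← two_smul R x, invOf_smul_smul]
  exact hsum ▸ Submodule.add_mem_sup hplus hminus

end LinearAlgebra

section FormsOnStandardBasis

variable {n : ℕ} {M : Type*} [AddCommGroup M] [Module ℝ M]

lemma stdB_apply (i j : Fin n) : stdB i j = if j = i then 1 else 0 := Pi.single_apply i 1 j

lemma linearMap_ext_stdB {f g : V n →ₗ[ℝ] M} (h : ∀ i, f (stdB i) = g (stdB i)) : f = g :=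
  (Pi.basisFun ℝ (Fin n)).ext fun i => by simpa only [Pi.basisFun_apply, stdB] using h i

lemma isAlt_ext_of_lt {α β : V n →ₗ[ℝ] V n →ₗ[ℝ] M} (hα : α.IsAlt) (hβ : β.IsAlt)
    (h : ∀ i j, i < j → α (stdB i) (stdB j) = β (stdB i) (stdB j)) : α = β := by
  refine linearMap_ext_stdB fun i => linearMap_ext_stdB fun j => ?_
  rcases lt_trichotomy i j with hij | rfl | hji
  · exact h i j hij
  · rw [hα, hβ]
  · rw [← hα.neg, ← hβ.neg, h j i hji]

lemma mem_Torsion_iff_isAlt {T : Tri n} : T ∈ Torsion n ↔ T.IsAlt := by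
  refine ⟨fun hT X => LinearMap.ext fun Z => self_eq_neg.1 (hT X X Z), fun hT X Y Z => ?_⟩
  rw [← hT.neg, LinearMap.neg_apply]

/-- The trilinear form `(X, Y, Z) ↦ T (Z, X, Y)`, an ingredient of the Bianchi map. -/
def rotateArgs (T : Tri n) : Tri n := LinearMap.lflip.toLinearMap ∘ₗ T.flip

/-- The Bianchi map `𝔟`, whose kernel is `kerBianchi`. -/
def bianchi (T : Tri n) : Tri n := T + rotateArgs (rotateArgs T) + rotateArgs T

lemma bianchi_apply (T : Tri n) (X Y Z : V n) :
    bianchi T X Y Z = T X Y Z + T Y Z X + T Z X Y := rfl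

lemma mem_kerBianchi_iff_of_lt {T : Tri n} (hT : T.IsAlt) :
    T ∈ kerBianchi n ↔
      ∀ i j k, i < j → j < k → bianchi T (stdB i) (stdB j) (stdB k) = 0 := by
  refine ⟨fun h i j k _ _ => h _ _ _, fun h => ?_⟩
  have hrot (X Y Z : V n) : bianchi T Y Z X = bianchi T X Y Z := by
    simp only [bianchi_apply]; ring
  have hskew (X Y Z : V n) : bianchi T Y X Z = -bianchi T X Y Z := by
    simp only [bianchi_apply, ← hT.neg X Y, ← hT.neg Y Z, ← hT.neg Z X, LinearMap.neg_apply]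
    ring
  suffices bianchi T = 0 from fun X Y Z => by rw [← bianchi_apply, this]; rfl
  refine linearMap_ext_stdB fun i => linearMap_ext_stdB fun j => linearMap_ext_stdB fun k => ?_
  simp only [LinearMap.zero_apply]
  grind

/-- The trace map `c`, whose kernel is `kerTrace`. -/
def torsionTrace : Tri n →ₗ[ℝ] V n →ₗ[ℝ] ℝ where
  toFun T := ∑ j, (T.flip (stdB j)).flip (stdB j)
  map_add' S T := by ext; simp [Finset.sum_add_distrib]
  map_smul' r T := by ext; simp [Finset.mul_sum]

lemma torsionTrace_apply (T : Tri n) (X : V n) :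
    torsionTrace T X = ∑ j, T X (stdB j) (stdB j) := by
  simp [torsionTrace]

lemma kerTrace_eq_ker_torsionTrace : kerTrace n = LinearMap.ker torsionTrace := by
  ext T
  simp only [LinearMap.mem_ker, LinearMap.ext_iff, torsionTrace_apply]
  rfl

/-- The vectorial torsion tensor `T_ν(X,Y,Z) = ν(X)⟨Y,Z⟩ − ν(Y)⟨X,Z⟩`, the generator of `VecT`. -/
def vectorialTorsion (ν : V n →ₗ[ℝ] ℝ) : Tri n :=
  ν.smulRight (dotProductBilin ℝ ℝ) - (ν.smulRight (dotProductBilin ℝ ℝ)).flip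

lemma vectorialTorsion_apply (ν : V n →ₗ[ℝ] ℝ) (X Y Z : V n) :
    vectorialTorsion ν X Y Z = ν X * inn Y Z - ν Y * inn X Z := rfl

lemma isAlt_vectorialTorsion (ν : V n →ₗ[ℝ] ℝ) : (vectorialTorsion ν).IsAlt :=
  fun X => LinearMap.ext fun Z => by rw [vectorialTorsion_apply, sub_self, LinearMap.zero_apply]

lemma inn_comm (X Y : V n) : inn X Y = inn Y X := dotProduct_comm X Y

lemma inn_stdB_right (X : V n) (i : Fin n) : inn X (stdB i) = X i := dotProduct_single_one X i

lemma vectorialTorsion_mem_kerBianchi (ν : V n →ₗ[ℝ] ℝ) :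
    vectorialTorsion ν ∈ kerBianchi n := fun X Y Z => by
  simp only [vectorialTorsion_apply, inn_comm Y X, inn_comm Z X, inn_comm Z Y]
  ring

lemma torsionTrace_vectorialTorsion (ν : V n →ₗ[ℝ] ℝ) :
    torsionTrace (vectorialTorsion ν) = (n - 1 : ℝ) • ν := by
  refine linearMap_ext_stdB fun i => ?_
  simp [torsionTrace_apply, vectorialTorsion_apply, inn_stdB_right, stdB_apply, sub_mul]

/-- The decomposable `M`-valued `2`-form `(eⁱ ∧ eʲ) ⊗ m`, linear in `m`. -/
def wedge (i j : Fin n) : M →ₗ[ℝ] V n →ₗ[ℝ] V n →ₗ[ℝ] M where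
  toFun m := (LinearMap.proj i).smulRight ((LinearMap.proj j).smulRight m) -
    (LinearMap.proj j).smulRight ((LinearMap.proj i).smulRight m)
  map_add' m m' := LinearMap.ext₂ fun X Y => by
    simp only [LinearMap.sub_apply, LinearMap.add_apply, LinearMap.smulRight_apply,
      LinearMap.smul_apply, LinearMap.proj_apply]
    module
  map_smul' r m := LinearMap.ext₂ fun X Y => by
    simp only [LinearMap.sub_apply, LinearMap.smulRight_apply, LinearMap.smul_apply,
      LinearMap.proj_apply, RingHom.id_apply]
    module

lemma wedge_apply (i j : Fin n) (m : M) (X Y : V n) :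
    wedge i j m X Y = (X i * Y j - X j * Y i) • m := by
  simp only [wedge, LinearMap.coe_mk, AddHom.coe_mk, LinearMap.sub_apply,
    LinearMap.smulRight_apply, LinearMap.smul_apply, LinearMap.proj_apply, smul_smul, sub_smul]

/-- The component `α ↦ α(eᵢ, eⱼ)` of a bilinear map. -/
def component (i j : Fin n) : (V n →ₗ[ℝ] V n →ₗ[ℝ] M) →ₗ[ℝ] M :=
  LinearMap.applyₗ (stdB j) ∘ₗ LinearMap.applyₗ (stdB i)

lemma component_apply (i j : Fin n) (α : V n →ₗ[ℝ] V n →ₗ[ℝ] M) :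
    component i j α = α (stdB i) (stdB j) := rfl

end FormsOnStandardBasis

section HodgeStar

variable {M N : Type*} [AddCommGroup M] [Module ℝ M] [AddCommGroup N] [Module ℝ N]

/-- The Hodge star on `M`-valued `2`-forms on `ℝ⁴`: it exchanges `e⁰ ∧ eⁱ` and `eʲ ∧ eᵏ` for
every cyclic permutation `(i, j, k)` of `(1, 2, 3)`. It is defined on all bilinear maps so as to
be an endomorphism, but is meaningful on alternating ones only. -/
def hodgeStar : Module.End ℝ (V 4 →ₗ[ℝ] V 4 →ₗ[ℝ] M) :=
  wedge 0 1 ∘ₗ component 2 3 + wedge 2 3 ∘ₗ component 0 1 +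
    wedge 0 2 ∘ₗ component 3 1 + wedge 3 1 ∘ₗ component 0 2 +
    wedge 0 3 ∘ₗ component 1 2 + wedge 1 2 ∘ₗ component 0 3

lemma hodgeStar_apply (α : V 4 →ₗ[ℝ] V 4 →ₗ[ℝ] M) (X Y : V 4) :
    hodgeStar α X Y =
      (X 0 * Y 1 - X 1 * Y 0) • α (stdB 2) (stdB 3) +
      (X 2 * Y 3 - X 3 * Y 2) • α (stdB 0) (stdB 1) +
      (X 0 * Y 2 - X 2 * Y 0) • α (stdB 3) (stdB 1) +
      (X 3 * Y 1 - X 1 * Y 3) • α (stdB 0) (stdB 2) +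
      (X 0 * Y 3 - X 3 * Y 0) • α (stdB 1) (stdB 2) +
      (X 1 * Y 2 - X 2 * Y 1) • α (stdB 0) (stdB 3) := by
  simp only [hodgeStar, LinearMap.add_apply, LinearMap.comp_apply, wedge_apply, component_apply]

lemma isAlt_hodgeStar (α : V 4 →ₗ[ℝ] V 4 →ₗ[ℝ] M) : (hodgeStar α).IsAlt := fun X => by
  simp [hodgeStar_apply, mul_comm]

lemma hodgeStar_hodgeStar {α : V 4 →ₗ[ℝ] V 4 →ₗ[ℝ] M} (hα : α.IsAlt) :
    hodgeStar (hodgeStar α) = α := by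
  refine isAlt_ext_of_lt (isAlt_hodgeStar _) hα fun i j hij => ?_
  fin_cases i <;> fin_cases j <;> simp_all [hodgeStar_apply, stdB_apply, hα.neg]

lemma hodgeStar_compr₂ (α : V 4 →ₗ[ℝ] V 4 →ₗ[ℝ] M) (f : M →ₗ[ℝ] N) :
    hodgeStar (α.compr₂ f) = (hodgeStar α).compr₂ f :=
  LinearMap.ext₂ fun X Y => by
    simp only [hodgeStar_apply, LinearMap.compr₂_apply, map_add, map_smul]

lemma torsionTrace_hodgeStar {T : Tri 4} (hT : T.IsAlt) (X : V 4) :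
    torsionTrace (hodgeStar T) X =
      X 0 * bianchi T (stdB 1) (stdB 2) (stdB 3) - X 1 * bianchi T (stdB 0) (stdB 2) (stdB 3) +
      X 2 * bianchi T (stdB 0) (stdB 1) (stdB 3) - X 3 * bianchi T (stdB 0) (stdB 1) (stdB 2) := by
  simp only [torsionTrace_apply, hodgeStar_apply, bianchi_apply, stdB_apply, Fin.sum_univ_four,
    ← hT.neg (stdB 0) (stdB 2), ← hT.neg (stdB 0) (stdB 3), ← hT.neg (stdB 1) (stdB 3),
    LinearMap.add_apply, LinearMap.smul_apply, LinearMap.neg_apply, smul_eq_mul, ↓reduceIte,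
    Fin.reduceEq, one_ne_zero, zero_ne_one]
  ring

lemma hodgeStar_mem_kerTrace_iff {T : Tri 4} (hT : T.IsAlt) :
    hodgeStar T ∈ kerTrace 4 ↔ T ∈ kerBianchi 4 := by
  rw [mem_kerBianchi_iff_of_lt hT, kerTrace_eq_ker_torsionTrace, LinearMap.mem_ker,
    LinearMap.ext_iff]
  simp only [torsionTrace_hodgeStar hT, LinearMap.zero_apply]
  constructor
  · intro h i j k hij hjk
    have h123 : bianchi T (stdB 1) (stdB 2) (stdB 3) = 0 := by simpa [stdB_apply] using h (stdB 0)
    have h023 : bianchi T (stdB 0) (stdB 2) (stdB 3) = 0 := by simpa [stdB_apply] using h (stdB 1)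
    have h013 : bianchi T (stdB 0) (stdB 1) (stdB 3) = 0 := by simpa [stdB_apply] using h (stdB 2)
    have h012 : bianchi T (stdB 0) (stdB 1) (stdB 2) = 0 := by simpa [stdB_apply] using h (stdB 3)
    fin_cases i <;> fin_cases j <;> fin_cases k <;> simp_all
  · intro h X
    simp [h]

lemma hodgeStar_mem_kerBianchi_iff {T : Tri 4} (hT : T.IsAlt) :
    hodgeStar T ∈ kerBianchi 4 ↔ T ∈ kerTrace 4 := by
  rw [← hodgeStar_mem_kerTrace_iff (isAlt_hodgeStar T), hodgeStar_hodgeStar hT]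

lemma hodgeStar_mem_CartanA {T : Tri 4} (hT : T ∈ CartanA 4) : hodgeStar T ∈ CartanA 4 := by
  obtain ⟨⟨hT_skew, hT_bianchi⟩, hT_trace⟩ := hT
  have hT_alt : T.IsAlt := mem_Torsion_iff_isAlt.1 hT_skew
  exact ⟨⟨mem_Torsion_iff_isAlt.2 (isAlt_hodgeStar T),
    (hodgeStar_mem_kerBianchi_iff hT_alt).2 hT_trace⟩,
    (hodgeStar_mem_kerTrace_iff hT_alt).2 hT_bianchi⟩

lemma eq_smul_hodgeStar_of_mem_eigenspace {ε : ℝ} (hε : ε ^ 2 = 1)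
    {α : V 4 →ₗ[ℝ] V 4 →ₗ[ℝ] M} (hα : α ∈ hodgeStar.eigenspace ε) : α = ε • hodgeStar α := by
  rw [Module.End.mem_eigenspace_iff.1 hα, smul_smul, ← sq, hε, one_smul]

lemma isAlt_of_mem_eigenspace_hodgeStar {ε : ℝ} (hε : ε ^ 2 = 1) {α : V 4 →ₗ[ℝ] V 4 →ₗ[ℝ] M}
    (hα : α ∈ hodgeStar.eigenspace ε) : α.IsAlt := fun X => by
  rw [eq_smul_hodgeStar_of_mem_eigenspace hε hα, LinearMap.smul_apply,
    LinearMap.smul_apply, isAlt_hodgeStar, smul_zero]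

lemma CartanA_inf_eigenspace_hodgeStar {ε : ℝ} (hε : ε ^ 2 = 1) :
    CartanA 4 ⊓ hodgeStar.eigenspace ε = hodgeStar.eigenspace ε ⊓ kerTrace 4 := by
  ext T
  refine ⟨fun ⟨hA, hT⟩ => ⟨hT, hA.2⟩, fun ⟨hT, hc⟩ => ?_⟩
  have hT_alt := isAlt_of_mem_eigenspace_hodgeStar hε hT
  have hT_star : hodgeStar T ∈ kerTrace 4 := by
    rw [Module.End.mem_eigenspace_iff.1 hT]
    exact (kerTrace 4).smul_mem ε hc
  exact ⟨⟨⟨mem_Torsion_iff_isAlt.2 hT_alt, (hodgeStar_mem_kerTrace_iff hT_alt).1 hT_star⟩, hc⟩, hT⟩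

lemma add_smul_hodgeStar_mem_eigenspace {ε : ℝ} (hε : ε ^ 2 = 1) {α : V 4 →ₗ[ℝ] V 4 →ₗ[ℝ] M}
    (hα : α.IsAlt) : α + ε • hodgeStar α ∈ hodgeStar.eigenspace ε := by
  rw [Module.End.mem_eigenspace_iff, map_add, map_smul, hodgeStar_hodgeStar hα, smul_add,
    smul_smul, ← sq, hε, one_smul, add_comm]

/-- The `M`-valued `2`-form `Σᵢ (e⁰ ∧ eⁱ + ε eʲ ∧ eᵏ) ⊗ φᵢ`, the sum running over the cyclic
permutations `(i, j, k)` of `(1, 2, 3)`; it is selfdual for `ε = 1`, anti-selfdual for `ε = -1`. -/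
def dualForm (ε : ℝ) : (Fin 3 → M) →ₗ[ℝ] V 4 →ₗ[ℝ] V 4 →ₗ[ℝ] M :=
  (wedge 0 1 + ε • wedge 2 3) ∘ₗ LinearMap.proj 0 +
    (wedge 0 2 + ε • wedge 3 1) ∘ₗ LinearMap.proj 1 +
    (wedge 0 3 + ε • wedge 1 2) ∘ₗ LinearMap.proj 2

lemma dualForm_apply (ε : ℝ) (φ : Fin 3 → M) (X Y : V 4) :
    dualForm ε φ X Y =
      (X 0 * Y 1 - X 1 * Y 0 + ε * (X 2 * Y 3 - X 3 * Y 2)) • φ 0 +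
      (X 0 * Y 2 - X 2 * Y 0 + ε * (X 3 * Y 1 - X 1 * Y 3)) • φ 1 +
      (X 0 * Y 3 - X 3 * Y 0 + ε * (X 1 * Y 2 - X 2 * Y 1)) • φ 2 := by
  simp only [dualForm, LinearMap.add_apply, LinearMap.comp_apply, LinearMap.smul_apply,
    wedge_apply, LinearMap.proj_apply, add_smul, mul_smul]

lemma dualForm_stdB_zero_succ (ε : ℝ) (φ : Fin 3 → M) (i : Fin 3) :
    dualForm ε φ (stdB 0) (stdB i.succ) = φ i := by
  fin_cases i <;> simp [dualForm_apply, stdB_apply]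

lemma dualForm_injective (ε : ℝ) :
    Function.Injective (dualForm ε : (Fin 3 → M) →ₗ[ℝ] V 4 →ₗ[ℝ] V 4 →ₗ[ℝ] M) :=
  fun φ ψ h => funext fun i => by
    rw [← dualForm_stdB_zero_succ ε φ, h, dualForm_stdB_zero_succ]

lemma dualForm_mem_eigenspace_hodgeStar {ε : ℝ} (hε : ε ^ 2 = 1) (φ : Fin 3 → M) :
    dualForm ε φ ∈ hodgeStar.eigenspace ε := by
  have h01 : dualForm ε φ (stdB 0) (stdB 1) = φ 0 := dualForm_stdB_zero_succ ε φ 0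
  have h02 : dualForm ε φ (stdB 0) (stdB 2) = φ 1 := dualForm_stdB_zero_succ ε φ 1
  have h03 : dualForm ε φ (stdB 0) (stdB 3) = φ 2 := dualForm_stdB_zero_succ ε φ 2
  have h23 : dualForm ε φ (stdB 2) (stdB 3) = ε • φ 0 := by simp [dualForm_apply, stdB_apply]
  have h31 : dualForm ε φ (stdB 3) (stdB 1) = ε • φ 1 := by simp [dualForm_apply, stdB_apply]
  have h12 : dualForm ε φ (stdB 1) (stdB 2) = ε • φ 2 := by simp [dualForm_apply, stdB_apply]
  refine Module.End.mem_eigenspace_iff.2 (LinearMap.ext₂ fun X Y => ?_)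
  rw [hodgeStar_apply, h01, h02, h03, h23, h31, h12, LinearMap.smul_apply, LinearMap.smul_apply,
    dualForm_apply]
  match_scalars <;> grind

lemma eq_dualForm_of_mem_eigenspace_hodgeStar {ε : ℝ} (hε : ε ^ 2 = 1)
    {α : V 4 →ₗ[ℝ] V 4 →ₗ[ℝ] M} (hα : α ∈ hodgeStar.eigenspace ε) :
    α = dualForm ε fun i => α (stdB 0) (stdB i.succ) := by
  have hstar (X Y : V 4) : hodgeStar α X Y = ε • α X Y :=
    LinearMap.congr_fun₂ (Module.End.mem_eigenspace_iff.1 hα) X Y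
  have h23 : α (stdB 2) (stdB 3) = ε • α (stdB 0) (stdB 1) := by
    simpa [hodgeStar_apply, stdB_apply] using hstar (stdB 0) (stdB 1)
  have h31 : α (stdB 3) (stdB 1) = ε • α (stdB 0) (stdB 2) := by
    simpa [hodgeStar_apply, stdB_apply] using hstar (stdB 0) (stdB 2)
  have h12 : α (stdB 1) (stdB 2) = ε • α (stdB 0) (stdB 3) := by
    simpa [hodgeStar_apply, stdB_apply] using hstar (stdB 0) (stdB 3)
  refine LinearMap.ext₂ fun X Y => ?_
  have hXY : α X Y = ε • hodgeStar α X Y :=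
    LinearMap.congr_fun₂ (eq_smul_hodgeStar_of_mem_eigenspace hε hα) X Y
  rw [hXY, hodgeStar_apply, h23, h31, h12, dualForm_apply, Fin.succ_zero_eq_one,
    Fin.succ_one_eq_two, show Fin.succ 2 = (3 : Fin 4) from rfl]
  match_scalars <;> grind

lemma range_dualForm {ε : ℝ} (hε : ε ^ 2 = 1) :
    LinearMap.range (dualForm ε : (Fin 3 → M) →ₗ[ℝ] V 4 →ₗ[ℝ] V 4 →ₗ[ℝ] M) =
      hodgeStar.eigenspace ε := by
  apply le_antisymm
  · rintro _ ⟨φ, rfl⟩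
    exact dualForm_mem_eigenspace_hodgeStar hε φ
  · exact fun α hα => ⟨_, (eq_dualForm_of_mem_eigenspace_hodgeStar hε hα).symm⟩

lemma finrank_eigenspace_hodgeStar [FiniteDimensional ℝ M] {ε : ℝ} (hε : ε ^ 2 = 1) :
    Module.finrank ℝ ((hodgeStar (M := M)).eigenspace ε) = 3 * Module.finrank ℝ M := by
  rw [← range_dualForm hε, LinearMap.finrank_range_of_inj (dualForm_injective ε)]
  simp only [Module.finrank_pi_fintype, Finset.sum_const, Finset.card_univ, Fintype.card_fin,
    smul_eq_mul]

lemma map_torsionTrace_eigenspace_hodgeStar {ε : ℝ} (hε : ε ^ 2 = 1) :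
    (hodgeStar.eigenspace ε).map torsionTrace = ⊤ := by
  refine eq_top_iff.2 fun ν _ => ?_
  have htrace : torsionTrace (hodgeStar (vectorialTorsion ν)) = 0 :=
    LinearMap.mem_ker.1 <| kerTrace_eq_ker_torsionTrace ▸
      (hodgeStar_mem_kerTrace_iff (isAlt_vectorialTorsion ν)).2 (vectorialTorsion_mem_kerBianchi ν)
  refine ⟨(3⁻¹ : ℝ) • (vectorialTorsion ν + ε • hodgeStar (vectorialTorsion ν)),
    Submodule.smul_mem _ _ (add_smul_hodgeStar_mem_eigenspace hε (isAlt_vectorialTorsion ν)), ?_⟩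
  rw [map_smul, map_add, map_smul, htrace, smul_zero, add_zero, torsionTrace_vectorialTorsion,
    smul_smul]
  norm_num

lemma finrank_CartanA_inf_eigenspace_hodgeStar {ε : ℝ} (hε : ε ^ 2 = 1) :
    Module.finrank ℝ ↥(CartanA 4 ⊓ hodgeStar.eigenspace ε) = 8 := by
  have hV : Module.finrank ℝ (V 4 →ₗ[ℝ] ℝ) = 4 := by simp
  have h := finrank_map_add_finrank_inf_ker (hodgeStar.eigenspace ε) torsionTrace
  rw [map_torsionTrace_eigenspace_hodgeStar hε, ← kerTrace_eq_ker_torsionTrace,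
    ← CartanA_inf_eigenspace_hodgeStar hε, finrank_eigenspace_hodgeStar hε, finrank_top, hV] at h
  exact Nat.add_left_cancel h

lemma mem_eigenspace_hodgeStar_iff_forall_compr₂ {ε : ℝ} {T : Tri 4} :
    T ∈ hodgeStar.eigenspace ε ↔
      ∀ Z, T.compr₂ (LinearMap.applyₗ Z) ∈ hodgeStar.eigenspace ε := by
  simp only [Module.End.mem_eigenspace_iff, hodgeStar_compr₂]
  refine ⟨fun h Z => by rw [h]; rfl, fun h => ?_⟩
  exact LinearMap.ext₂ fun X Y => LinearMap.ext fun Z => LinearMap.congr_fun₂ (h Z) X Y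

lemma mem_eigenspace_hodgeStar_iff_forall_exists {ε : ℝ} (hε : ε ^ 2 = 1) {T : Tri 4} :
    T ∈ hodgeStar.eigenspace ε ↔
      ∀ Z, ∃ a b c : ℝ, ∀ X Y, T X Y Z = dualForm ε ![a, b, c] X Y := by
  rw [mem_eigenspace_hodgeStar_iff_forall_compr₂, ← range_dualForm hε]
  refine forall_congr' fun Z => ⟨?_, ?_⟩
  · rintro ⟨φ, hφ⟩
    have hφ_eq : ![φ 0, φ 1, φ 2] = φ := by ext i; fin_cases i <;> rfl
    exact ⟨φ 0, φ 1, φ 2, fun X Y => by rw [hφ_eq, hφ]; rfl⟩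
  · rintro ⟨a, b, c, h⟩
    exact ⟨![a, b, c], LinearMap.ext₂ fun X Y => (h X Y).symm⟩

lemma dualForm_one_apply (a b c : ℝ) (X Y : V 4) :
    dualForm 1 ![a, b, c] X Y = a * sd₁ X Y + b * sd₂ X Y + c * sd₃ X Y := by
  simp [dualForm_apply, sd₁, sd₂, sd₃, mul_comm]

lemma dualForm_neg_one_apply (a b c : ℝ) (X Y : V 4) :
    dualForm (-1) ![a, b, c] X Y = a * asd₁ X Y + b * asd₂ X Y + c * asd₃ X Y := by
  simp only [dualForm_apply, asd₁, asd₂, asd₃, smul_eq_mul, Matrix.cons_val]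
  ring

lemma Aplus_eq_CartanA_inf_eigenspace : Aplus = CartanA 4 ⊓ hodgeStar.eigenspace 1 := by
  ext T
  rw [Submodule.mem_inf, mem_eigenspace_hodgeStar_iff_forall_exists (one_pow 2)]
  simp only [dualForm_one_apply]
  rfl

lemma Aminus_eq_CartanA_inf_eigenspace : Aminus = CartanA 4 ⊓ hodgeStar.eigenspace (-1) := by
  ext T
  rw [Submodule.mem_inf, mem_eigenspace_hodgeStar_iff_forall_exists neg_one_sq]
  simp only [dualForm_neg_one_apply]
  rfl

end HodgeStar

/-- in dimension 4, `𝒜₊` and `𝒜₋` each have dimension 8 and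
`𝒜 = 𝒜₊ ⊕ 𝒜₋` as an internal direct sum. -/
theorem cartanA_selfdual_decomposition :
    Module.finrank ℝ ↥Aplus = 8 ∧
    Module.finrank ℝ ↥Aminus = 8 ∧
    Aplus ⊔ Aminus = CartanA 4 ∧
    Aplus ⊓ Aminus = ⊥ := by
  rw [Aplus_eq_CartanA_inf_eigenspace, Aminus_eq_CartanA_inf_eigenspace]
  refine ⟨finrank_CartanA_inf_eigenspace_hodgeStar (one_pow 2),
    finrank_CartanA_inf_eigenspace_hodgeStar neg_one_sq, ?_, ?_⟩
  · exact inf_eigenspace_one_sup_inf_eigenspace_neg_one (fun T hT => hodgeStar_mem_CartanA hT)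
      fun T hT => hodgeStar_hodgeStar (mem_Torsion_iff_isAlt.1 hT.1.1)
  · have hdisj : Disjoint (hodgeStar.eigenspace (M := Tri 4) 1) (hodgeStar.eigenspace (-1)) :=
      hodgeStar.eigenspaces_iSupIndep.pairwiseDisjoint (by norm_num)
    exact (hdisj.mono inf_le_right inf_le_right).eq_bot
end
end

section
/- The space of torsion tensors on ℝ⁴ of anti-Z type, i.e. satisfying Z_{ijk} = T_{ijj} + T_{ikk} + T_{jkl} = 0 for every direct ordering (i,j,k,l), is a linear subspace of dimension 12. -/
/-!
For pairwise distinct `j, k, l` there is exactly one remaining index `i`, and exactly one of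
`(i,j,k,l)`, `(i,k,j,l)` is a direct ordering. Since `T_{kjl} = -T_{jkl}`, exactly one of the
equations `Z = 0` involves `T_{jkl}` up to sign, and it expresses this component through the
components `T_{ijj}` and `T_{ikk}`. So the twelve numbers `T_{ijj}` with `i ≠ j` are unconstrained
and determine the tensor: they are coordinates on the space of tensors of anti-`Z` type.
-/

noncomputable section

set_option maxSynthPendingDepth 3

/-- `(i,j,k,l)` is a direct ordering when it is an even permutation of `(0,1,2,3)`. -/
def DirectOrdering (i j k l : Fin 4) : Prop :=
  ∃ σ : Equiv.Perm (Fin 4), Equiv.Perm.sign σ = 1 ∧ σ 0 = i ∧ σ 1 = j ∧ σ 2 = k ∧ σ 3 = l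

instance (i j k l : Fin 4) : Decidable (DirectOrdering i j k l) :=
  inferInstanceAs (Decidable (∃ σ : Equiv.Perm (Fin 4),
    Equiv.Perm.sign σ = 1 ∧ σ 0 = i ∧ σ 1 = j ∧ σ 2 = k ∧ σ 3 = l))

/-- `Z_{ijk} = T_{ijj} + T_{ikk} + T_{jkl}` for a direct ordering `(i,j,k,l)`. -/
def Zc (T : Tri 4) (i j k l : Fin 4) : ℝ :=
  T (stdB i) (stdB j) (stdB j) + T (stdB i) (stdB k) (stdB k) + T (stdB j) (stdB k) (stdB l)

/-- The space of torsion tensors of anti-`Z` type: `Z_{ijk} = 0` for every direct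
ordering `(i,j,k,l)`. -/
def AntiZ : Submodule ℝ (Tri 4) where
  carrier := {T | T ∈ Torsion 4 ∧ ∀ i j k l, DirectOrdering i j k l → Zc T i j k l = 0}
  zero_mem' := ⟨(Torsion 4).zero_mem, by intro i j k l _; simp [Zc]⟩
  add_mem' := by
    rintro T S ⟨hT, hT'⟩ ⟨hS, hS'⟩
    refine ⟨(Torsion 4).add_mem hT hS, fun i j k l h => ?_⟩
    have h1 := hT' i j k l h
    have h2 := hS' i j k l h
    simp only [Zc, LinearMap.add_apply] at h1 h2 ⊢
    linear_combination h1 + h2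
  smul_mem' := by
    rintro c T ⟨hT, hT'⟩
    refine ⟨(Torsion 4).smul_mem c hT, fun i j k l h => ?_⟩
    have h1 := hT' i j k l h
    simp only [Zc, LinearMap.smul_apply, smul_eq_mul] at h1 ⊢
    linear_combination c * h1

section Trilinear

variable {R ι M N : Type*} [CommSemiring R] [AddCommMonoid M] [Module R M]
  [AddCommMonoid N] [Module R N]

/-- The components of a trilinear map on a module with respect to a basis, as a linear equivalence
between trilinear maps and arrays of values. -/
def trilinearComponents (b : Module.Basis ι R M) :
    (M →ₗ[R] M →ₗ[R] M →ₗ[R] N) ≃ₗ[R] (ι → ι → ι → N) :=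
  (b.constr R).symm ≪≫ₗ .piCongrRight fun _ =>
    (b.constr R).symm ≪≫ₗ .piCongrRight fun _ => (b.constr R).symm

lemma trilinearComponents_apply (b : Module.Basis ι R M) (T : M →ₗ[R] M →ₗ[R] M →ₗ[R] N)
    (i j k : ι) : trilinearComponents b T i j k = T (b i) (b j) (b k) :=
  rfl

end Trilinear

section Components

variable {n : ℕ}

lemma basisFun_eq_stdB (i : Fin n) : Pi.basisFun ℝ (Fin n) i = stdB i :=
  Pi.basisFun_apply ℝ (Fin n) i

lemma exists_tri_apply_stdB (c : Fin n → Fin n → Fin n → ℝ) :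
    ∃ T : Tri n, ∀ i j k, T (stdB i) (stdB j) (stdB k) = c i j k := by
  obtain ⟨T, rfl⟩ := (trilinearComponents (Pi.basisFun ℝ (Fin n))).surjective c
  exact ⟨T, fun i j k => by simp only [trilinearComponents_apply, basisFun_eq_stdB]⟩

lemma tri_ext_stdB {S T : Tri n}
    (h : ∀ i j k, S (stdB i) (stdB j) (stdB k) = T (stdB i) (stdB j) (stdB k)) : S = T := by
  refine (trilinearComponents (Pi.basisFun ℝ (Fin n))).injective ?_
  ext i j k
  simpa only [trilinearComponents_apply, basisFun_eq_stdB] using h i j k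

lemma mem_torsion_iff_stdB {T : Tri n} :
    T ∈ Torsion n ↔
      ∀ i j k, T (stdB i) (stdB j) (stdB k) = -T (stdB j) (stdB i) (stdB k) := by
  refine ⟨fun hT i j k => hT _ _ _, fun hT X Y Z => ?_⟩
  have hflip : T = -T.flip := tri_ext_stdB hT
  exact congr($hflip X Y Z)

end Components

namespace DirectOrdering

variable {i j k l m : Fin 4}

lemma ne (h : DirectOrdering i j k l) :
    i ≠ j ∧ i ≠ k ∧ i ≠ l ∧ j ≠ k ∧ j ≠ l ∧ k ≠ l := by
  obtain ⟨σ, -, rfl, rfl, rfl, rfl⟩ := h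
  simp [σ.injective.eq_iff]

lemma head_unique (h : DirectOrdering i j k l) (h' : DirectOrdering m j k l) : m = i := by
  have := h.ne
  have := h'.ne
  omega

lemma not_swap (h : DirectOrdering i j k l) : ¬ DirectOrdering m k j l := by
  obtain ⟨σ, hσ, rfl, rfl, rfl, rfl⟩ := h
  revert m σ
  decide

lemma exists_of_ne (hjk : j ≠ k) (hjl : j ≠ l) (hkl : k ≠ l) :
    ∃ i, DirectOrdering i j k l ∨ DirectOrdering i k j l := by
  revert j k l
  decide

end DirectOrdering

/-- The sum of `a i j + a i k` over the at most one index `i` such that `(i,j,k,l)` is a direct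
ordering: if `a` collects the components `T_{ijj}`, this is the value of `-T_{jkl}` imposed by
`Z_{ijk} = 0`. -/
def directOrderingSum (a : Fin 4 → Fin 4 → ℝ) (j k l : Fin 4) : ℝ :=
  ∑ i with DirectOrdering i j k l, (a i j + a i k)

lemma directOrderingSum_eq (a : Fin 4 → Fin 4 → ℝ) {i j k l : Fin 4} (h : DirectOrdering i j k l) :
    directOrderingSum a j k l = a i j + a i k :=
  Finset.sum_eq_single_of_mem i (by simpa using h) fun _ hm hne =>
    absurd (h.head_unique (Finset.mem_filter.1 hm).2) hne

lemma directOrderingSum_eq_zero (a : Fin 4 → Fin 4 → ℝ) {j k l : Fin 4}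
    (h : ∀ i, ¬ DirectOrdering i j k l) : directOrderingSum a j k l = 0 := by
  rw [directOrderingSum, Finset.filter_false_of_mem fun i _ => h i, Finset.sum_empty]

/-- The components of the anti-`Z` tensor with `T_{ijj} = a i j` for `i ≠ j`. The values `a i i`
cancel. -/
def antiZCoeff (a : Fin 4 → Fin 4 → ℝ) (j k l : Fin 4) : ℝ :=
  ((if k = l then a j k else 0) - directOrderingSum a j k l) -
    ((if j = l then a k j else 0) - directOrderingSum a k j l)

section Coefficients

variable (a : Fin 4 → Fin 4 → ℝ) {i j k l : Fin 4}

lemma antiZCoeff_swap (j k l : Fin 4) : antiZCoeff a j k l = -antiZCoeff a k j l :=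
  (neg_sub _ _).symm

lemma antiZCoeff_diagonal (hij : i ≠ j) : antiZCoeff a i j j = a i j := by
  have hleft : directOrderingSum a i j j = 0 :=
    directOrderingSum_eq_zero a fun _ h => by simpa using h.ne
  have hright : directOrderingSum a j i j = 0 :=
    directOrderingSum_eq_zero a fun _ h => by simpa using h.ne
  simp [antiZCoeff, hleft, hright, hij]

lemma antiZCoeff_of_directOrdering (h : DirectOrdering i j k l) :
    antiZCoeff a j k l = -(a i j + a i k) := by
  obtain ⟨-, -, -, -, hjl, hkl⟩ := h.ne
  simp [antiZCoeff, directOrderingSum_eq a h, directOrderingSum_eq_zero a fun _ => h.not_swap,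
    hjl, hkl]

end Coefficients

lemma exists_mem_antiZ_diagonal_eq (a : Fin 4 → Fin 4 → ℝ) :
    ∃ T ∈ AntiZ, ∀ i j, i ≠ j → T (stdB i) (stdB j) (stdB j) = a i j := by
  obtain ⟨T, hT⟩ := exists_tri_apply_stdB (antiZCoeff a)
  refine ⟨T, ⟨mem_torsion_iff_stdB.2 fun i j k => ?_, fun i j k l h => ?_⟩, fun i j hij => ?_⟩
  · rw [hT, hT, antiZCoeff_swap]
  · obtain ⟨hij, hik, -⟩ := h.ne
    rw [Zc, hT, hT, hT, antiZCoeff_diagonal a hij, antiZCoeff_diagonal a hik,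
      antiZCoeff_of_directOrdering a h, add_neg_cancel]
  · rw [hT, antiZCoeff_diagonal a hij]

lemma apply_stdB_of_mem_antiZ {T : Tri 4} (hT : T ∈ AntiZ) {i j k l : Fin 4}
    (h : DirectOrdering i j k l) :
    T (stdB j) (stdB k) (stdB l) =
      -(T (stdB i) (stdB j) (stdB j) + T (stdB i) (stdB k) (stdB k)) :=
  eq_neg_of_add_eq_zero_right (hT.2 i j k l h)

lemma antiZ_ext_diagonal {S T : Tri 4} (hS : S ∈ AntiZ) (hT : T ∈ AntiZ)
    (hdiag : ∀ i j, i ≠ j → S (stdB i) (stdB j) (stdB j) = T (stdB i) (stdB j) (stdB j)) :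
    S = T := by
  have hdirect {i j k l : Fin 4} (h : DirectOrdering i j k l) :
      S (stdB j) (stdB k) (stdB l) = T (stdB j) (stdB k) (stdB l) := by
    obtain ⟨hij, hik, -⟩ := h.ne
    rw [apply_stdB_of_mem_antiZ hS h, apply_stdB_of_mem_antiZ hT h, hdiag i j hij, hdiag i k hik]
  refine tri_ext_stdB fun j k l => ?_
  have hSswap := hS.1 (stdB j) (stdB k) (stdB l)
  have hTswap := hT.1 (stdB j) (stdB k) (stdB l)
  rcases eq_or_ne j k with rfl | hjk
  · rw [self_eq_neg.1 hSswap, self_eq_neg.1 hTswap]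
  rcases eq_or_ne k l with rfl | hkl
  · exact hdiag j k hjk
  rcases eq_or_ne j l with rfl | hjl
  · rw [hSswap, hTswap, hdiag k j hjk.symm]
  obtain ⟨i, h | h⟩ := DirectOrdering.exists_of_ne hjk hjl hkl
  · exact hdirect h
  · rw [hSswap, hTswap, hdirect h]

/-- The linear map sending an anti-`Z` tensor to its components `T_{ijj}` with `i ≠ j`, which
serve as coordinates on `AntiZ`. -/
def antiZDiagonal : AntiZ →ₗ[ℝ] ({p : Fin 4 × Fin 4 // p.1 ≠ p.2} → ℝ) where
  toFun T p := T.1 (stdB p.1.1) (stdB p.1.2) (stdB p.1.2)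
  map_add' _ _ := rfl
  map_smul' _ _ := rfl

lemma antiZDiagonal_injective : Function.Injective antiZDiagonal := fun S T h =>
  Subtype.ext <| antiZ_ext_diagonal S.2 T.2 fun i j hij => congrFun h ⟨(i, j), hij⟩

lemma antiZDiagonal_surjective : Function.Surjective antiZDiagonal := by
  intro b
  obtain ⟨T, hT, hdiag⟩ :=
    exists_mem_antiZ_diagonal_eq fun i j => Function.extend Subtype.val b 0 (i, j)
  refine ⟨⟨T, hT⟩, funext fun p => ?_⟩
  exact (hdiag p.1.1 p.1.2 p.2).trans (Subtype.val_injective.extend_apply b 0 p)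

lemma antiZDiagonal_bijective : Function.Bijective antiZDiagonal :=
  ⟨antiZDiagonal_injective, antiZDiagonal_surjective⟩

/-- the space of torsion tensors on `ℝ⁴` of anti-`Z` type is a linear
subspace of dimension 12. -/
theorem antiZ_finrank : Module.finrank ℝ ↥AntiZ = 12 := by
  rw [(LinearEquiv.ofBijective _ antiZDiagonal_bijective).finrank_eq, Module.finrank_pi]
  decide
end
end

section
/- The forms of the gwistor structure satisfy α₁ ∧ α₂ = −(1/2) β ∧ β ∧ β = 3 e¹∧e²∧e³∧e⁴∧e⁵∧e⁶. -/
/-!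
Write `xᵢ = eⁱ` and `yᵢ = eⁱ⁺³`. The 2-forms `ωᵢ = xᵢ ∧ yᵢ` are central and square to zero, so
the multinomial expansion in a commutative ring gives `β³ = (ω₁ + ω₂ + ω₃)³ = 6 ω₁ω₂ω₃`.
Any six 1-forms satisfy `(u₁u₂u₃)(v₁v₂v₃) = -(u₁v₁)(u₂v₂)(u₃v₃)`. Fix the term `xᵢyᵢ₊₁yᵢ₊₂` of `α₁`
and rotate the terms of `α₂` so that `xᵢ` or `yᵢ` comes first: two of the three products acquire a
factor `xᵢxᵢ = 0`, and the third is `-ω₁ω₂ω₃`. Hence `α₁α₂ = -3 ω₁ω₂ω₃`, while the same identity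
applied to `(x₁x₂x₃)(y₁y₂y₃)` evaluates `ω₁ω₂ω₃`.
-/

noncomputable section

open ExteriorAlgebra

/-- The exterior algebra of forms generated by the standard (dual) basis of `ℝ⁷`. -/
abbrev Ext7 := ExteriorAlgebra ℝ (Fin 7 → ℝ)

/-- The basis 1-forms `e⁰, …, e⁶`. -/
def e (i : Fin 7) : Ext7 := ι ℝ (Pi.single i 1)

/-- The 1-form `μ = e⁰`. -/
def μ : Ext7 := e 0

/-- The 2-form `β = e¹∧e⁴ + e²∧e⁵ + e³∧e⁶`. -/
def β : Ext7 := e 1 * e 4 + e 2 * e 5 + e 3 * e 6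

/-- The 3-form `α = e⁴∧e⁵∧e⁶`. -/
def α : Ext7 := e 4 * e 5 * e 6

/-- The 3-form `α₁ = e¹∧e⁵∧e⁶ + e²∧e⁶∧e⁴ + e³∧e⁴∧e⁵`. -/
def α₁ : Ext7 := e 1 * e 5 * e 6 + e 2 * e 6 * e 4 + e 3 * e 4 * e 5

/-- The 3-form `α₂ = e¹∧e²∧e⁶ + e²∧e³∧e⁴ + e³∧e¹∧e⁵`. -/
def α₂ : Ext7 := e 1 * e 2 * e 6 + e 2 * e 3 * e 4 + e 3 * e 1 * e 5

/-- The `G₂` 3-form `φ = α + μ∧β − α₂` of gwistor space. -/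
def φ : Ext7 := α + μ * β - α₂

/-- The 4-form `Φ = e⁰∧e¹∧e²∧e³ − (1/2)β∧β − μ∧α₁`, the Hodge dual of `φ`. -/
def Φ : Ext7 := e 0 * e 1 * e 2 * e 3 - (1/2 : ℝ) • (β * β) - μ * α₁

/-- The volume form `Vol = e⁰∧e¹∧e²∧e³∧e⁴∧e⁵∧e⁶`. -/
def Vol : Ext7 := e 0 * e 1 * e 2 * e 3 * e 4 * e 5 * e 6

section SquareZero

variable {A σ : Type*} [CommSemiring A]

lemma add_pow_succ_of_sq_eq_zero {a : A} (ha : a ^ 2 = 0) (b : A) (n : ℕ) :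
    (a + b) ^ (n + 1) = b ^ (n + 1) + (n + 1) • (a * b ^ n) := by
  induction n with
  | zero => simp [add_comm]
  | succ n ih =>
    calc (a + b) ^ (n + 2)
        = (b ^ (n + 1) + (n + 1) • (a * b ^ n)) * (a + b) := by rw [pow_succ, ih]
      _ = b ^ (n + 2) + (n + 2) • (a * b ^ (n + 1)) + (n + 1) • (a ^ 2 * b ^ n) := by
        simp only [nsmul_eq_mul, Nat.cast_add, Nat.cast_one, Nat.cast_ofNat]
        ring
      _ = b ^ (n + 2) + (n + 2) • (a * b ^ (n + 1)) := by rw [ha, zero_mul, smul_zero, add_zero]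

lemma sum_pow_card_succ_eq_zero_of_sq_eq_zero {f : σ → A} {s : Finset σ}
    (hf : ∀ i ∈ s, f i ^ 2 = 0) : (∑ i ∈ s, f i) ^ (s.card + 1) = 0 := by
  classical
  induction s using Finset.induction_on with
  | empty => simp
  | insert i s hi ih =>
    rw [Finset.forall_mem_insert] at hf
    rw [Finset.sum_insert hi, Finset.card_insert_of_notMem hi,
      add_pow_succ_of_sq_eq_zero hf.1, pow_succ, ih hf.2, zero_mul, mul_zero, smul_zero, add_zero]

lemma sum_pow_card_of_sq_eq_zero {f : σ → A} {s : Finset σ} (hf : ∀ i ∈ s, f i ^ 2 = 0) :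
    (∑ i ∈ s, f i) ^ s.card = s.card.factorial • ∏ i ∈ s, f i := by
  classical
  induction s using Finset.induction_on with
  | empty => simp
  | insert i s hi ih =>
    rw [Finset.forall_mem_insert] at hf
    rw [Finset.sum_insert hi, Finset.prod_insert hi, Finset.card_insert_of_notMem hi,
      add_pow_succ_of_sq_eq_zero hf.1, sum_pow_card_succ_eq_zero_of_sq_eq_zero hf.2, ih hf.2,
      zero_add, Nat.factorial_succ, mul_smul_comm, smul_smul]

end SquareZero

section Bivector

variable (R : Type*) {M : Type*} [CommRing R] [AddCommGroup M] [Module R M]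

lemma ι_mul_ι_eq_neg_swap (u v : M) : ι R u * ι R v = -(ι R v * ι R u) :=
  eq_neg_of_add_eq_zero_left (ι_add_mul_swap u v)

lemma commute_ι_mul_ι_ι (u v w : M) : Commute (ι R u * ι R v) (ι R w) := by
  rw [Commute, SemiconjBy, mul_assoc, ι_mul_ι_eq_neg_swap R v w, mul_neg, ← mul_assoc,
    ι_mul_ι_eq_neg_swap R u w, neg_mul, neg_neg, mul_assoc]

lemma ι_mul_ι_mul_ι_rotate (u v w : M) : ι R u * ι R v * ι R w = ι R w * ι R u * ι R v := by
  rw [commute_ι_mul_ι_ι, mul_assoc]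

lemma ι_mul_ι_mem_center (u v : M) :
    ι R u * ι R v ∈ Subalgebra.center R (ExteriorAlgebra R M) := by
  have commute_all (z : ExteriorAlgebra R M) : Commute (ι R u * ι R v) z := by
    induction z using ExteriorAlgebra.induction with
    | algebraMap r => exact (Algebra.commutes r _).symm
    | ι w => exact commute_ι_mul_ι_ι R u v w
    | mul a b ha hb => exact ha.mul_right hb
    | add a b ha hb => exact ha.add_right hb
  exact Subalgebra.mem_center_iff.mpr fun z => (commute_all z).symm

/-- The decomposable 2-form `u ∧ v`, as an element of the center of the exterior algebra, so that
products of such 2-forms can be computed in a commutative ring. -/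
def bivector (u v : M) : Subalgebra.center R (ExteriorAlgebra R M) :=
  ⟨ι R u * ι R v, ι_mul_ι_mem_center R u v⟩

lemma coe_bivector (u v : M) : (bivector R u v : ExteriorAlgebra R M) = ι R u * ι R v := rfl

lemma bivector_eq_neg_swap (u v : M) : bivector R u v = -bivector R v u :=
  Subtype.ext (ι_mul_ι_eq_neg_swap R u v)

lemma bivector_self (u : M) : bivector R u u = 0 :=
  Subtype.ext (ι_sq_zero u)

lemma bivector_sq (u v : M) : bivector R u v ^ 2 = 0 := by
  refine Subtype.ext ?_
  rw [Subalgebra.coe_pow, Subalgebra.coe_zero, coe_bivector, sq, ← mul_assoc,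
    commute_ι_mul_ι_ι, ← mul_assoc, ι_sq_zero, zero_mul, zero_mul]

lemma ι_triple_mul_ι_triple (u₁ u₂ u₃ v₁ v₂ v₃ : M) :
    ι R u₁ * ι R u₂ * ι R u₃ * (ι R v₁ * ι R v₂ * ι R v₃) =
      -(bivector R u₁ v₁ * bivector R u₂ v₂ * bivector R u₃ v₃) := by
  simp only [coe_bivector]
  calc ι R u₁ * ι R u₂ * ι R u₃ * (ι R v₁ * ι R v₂ * ι R v₃)
      = ι R u₁ * (ι R u₂ * ι R u₃ * ι R v₁) * ι R v₂ * ι R v₃ := by simp only [mul_assoc]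
    _ = ι R u₁ * ι R v₁ * ι R u₂ * (ι R u₃ * ι R v₂) * ι R v₃ := by
      rw [commute_ι_mul_ι_ι]
      simp only [mul_assoc]
    _ = -(ι R u₁ * ι R v₁ * (ι R u₂ * ι R v₂) * (ι R u₃ * ι R v₃)) := by
      rw [ι_mul_ι_eq_neg_swap R u₃ v₂]
      simp only [mul_assoc, mul_neg, neg_mul]

end Bivector

section GwistorForms

variable (R : Type*) {M : Type*} [CommRing R] [AddCommGroup M] [Module R M]

/-- The 2-form `β = ∑ xᵢ ∧ yᵢ` attached to two families of 1-forms. -/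
def betaForm {σ : Type*} [Fintype σ] (x y : σ → M) : ExteriorAlgebra R M :=
  ∑ i, ι R (x i) * ι R (y i)

lemma betaForm_pow_card {σ : Type*} [Fintype σ] (x y : σ → M) :
    betaForm R x y ^ Fintype.card σ =
      (Fintype.card σ).factorial • (∏ i, bivector R (x i) (y i) :) := by
  have coe_sum : (∑ i, bivector R (x i) (y i) :) = betaForm R x y :=
    AddSubmonoidClass.coe_finsetSum ..
  rw [← coe_sum, ← Subalgebra.coe_pow, Fintype.card,
    sum_pow_card_of_sq_eq_zero fun i _ => bivector_sq R (x i) (y i)]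
  rfl

variable (x y : Fin 3 → M)

/-- The 3-form `α₁ = ∑ xᵢ ∧ yᵢ₊₁ ∧ yᵢ₊₂` attached to a pair of triples of 1-forms; the sum is
cyclic, the indices being added modulo `3`. -/
def alphaOneForm : ExteriorAlgebra R M := ∑ i, ι R (x i) * ι R (y (i + 1)) * ι R (y (i + 2))

/-- The 3-form `α₂ = ∑ xᵢ ∧ xᵢ₊₁ ∧ yᵢ₊₂` attached to a pair of triples of 1-forms; the sum is
cyclic, the indices being added modulo `3`. -/
def alphaTwoForm : ExteriorAlgebra R M := ∑ i, ι R (x i) * ι R (x (i + 1)) * ι R (y (i + 2))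

lemma alphaTwoForm_eq_rotate (i : Fin 3) :
    alphaTwoForm R x y =
      ι R (x i) * ι R (x (i + 1)) * ι R (y (i + 2)) +
      ι R (y i) * ι R (x (i + 1)) * ι R (x (i + 2)) +
      ι R (x i) * ι R (y (i + 1)) * ι R (x (i + 2)) := by
  rw [alphaTwoForm, ← Equiv.sum_comp (Equiv.addLeft i), Fin.sum_univ_three,
    ← ι_mul_ι_mul_ι_rotate R (x (i + 1)) (x (i + 2)) (y i),
    ι_mul_ι_mul_ι_rotate R (x i) (y (i + 1)) (x (i + 2))]
  fin_cases i <;> rfl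

lemma alphaOneForm_term_mul_alphaTwoForm (i : Fin 3) :
    ι R (x i) * ι R (y (i + 1)) * ι R (y (i + 2)) * alphaTwoForm R x y =
      -(∏ j, bivector R (x j) (y j) :) := by
  have prod_eq : ∏ j, bivector R (x j) (y j) = bivector R (x i) (y i) *
      bivector R (x (i + 1)) (y (i + 1)) * bivector R (x (i + 2)) (y (i + 2)) := by
    rw [← Equiv.prod_comp (Equiv.addLeft i), Fin.prod_univ_three]
    simp
  rw [alphaTwoForm_eq_rotate R x y i, mul_add, mul_add]
  simp only [ι_triple_mul_ι_triple, bivector_self]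
  rw [bivector_eq_neg_swap R (y (i + 1)), bivector_eq_neg_swap R (y (i + 2)), prod_eq]
  simp

lemma alphaOneForm_mul_alphaTwoForm :
    alphaOneForm R x y * alphaTwoForm R x y = -(3 • (∏ i, bivector R (x i) (y i) :)) := by
  rw [alphaOneForm, Finset.sum_mul]
  simp only [alphaOneForm_term_mul_alphaTwoForm, Finset.sum_const, Finset.card_univ,
    Fintype.card_fin, smul_neg]

lemma prod_bivector_eq_neg : (∏ i, bivector R (x i) (y i) :) =
    -(ι R (x 0) * ι R (x 1) * ι R (x 2) * ι R (y 0) * ι R (y 1) * ι R (y 2)) := by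
  rw [Fin.prod_univ_three, Subalgebra.coe_mul, Subalgebra.coe_mul, ← neg_eq_iff_eq_neg]
  simpa only [← mul_assoc] using
    (ι_triple_mul_ι_triple R (x 0) (x 1) (x 2) (y 0) (y 1) (y 2)).symm

theorem alpha1_wedge_alpha2_general :
    (2 : R) • (alphaOneForm R x y * alphaTwoForm R x y) = -betaForm R x y ^ 3 ∧
    alphaOneForm R x y * alphaTwoForm R x y =
      (3 : R) • (ι R (x 0) * ι R (x 1) * ι R (x 2) * ι R (y 0) * ι R (y 1) * ι R (y 2)) := by
  have beta_cubed : betaForm R x y ^ 3 = 6 • (∏ i, bivector R (x i) (y i) :) :=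
    betaForm_pow_card R x y
  rw [alphaOneForm_mul_alphaTwoForm, beta_cubed, prod_bivector_eq_neg]
  constructor <;> module

end GwistorForms

/-- The coframe `e¹, e², e³`. -/
def horizontalCoframe : Fin 3 → Fin 7 → ℝ := ![Pi.single 1 1, Pi.single 2 1, Pi.single 3 1]

/-- The coframe `e⁴, e⁵, e⁶`. -/
def verticalCoframe : Fin 3 → Fin 7 → ℝ := ![Pi.single 4 1, Pi.single 5 1, Pi.single 6 1]

lemma β_eq_betaForm : β = betaForm ℝ horizontalCoframe verticalCoframe := by
  rw [betaForm, Fin.sum_univ_three]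
  rfl

lemma α₁_eq_alphaOneForm : α₁ = alphaOneForm ℝ horizontalCoframe verticalCoframe := by
  rw [alphaOneForm, Fin.sum_univ_three]
  rfl

lemma α₂_eq_alphaTwoForm : α₂ = alphaTwoForm ℝ horizontalCoframe verticalCoframe := by
  rw [alphaTwoForm, Fin.sum_univ_three]
  rfl

/-- `α₁ ∧ α₂ = −(1/2) β ∧ β ∧ β = 3 e¹∧e²∧e³∧e⁴∧e⁵∧e⁶`. -/
theorem alpha1_wedge_alpha2 :
    α₁ * α₂ = (-(1/2) : ℝ) • (β * β * β) ∧
    α₁ * α₂ = (3 : ℝ) • (e 1 * e 2 * e 3 * e 4 * e 5 * e 6) := by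
  rw [α₁_eq_alphaOneForm, α₂_eq_alphaTwoForm, β_eq_betaForm, ← pow_three']
  obtain ⟨h₁, h₂⟩ := alpha1_wedge_alpha2_general ℝ horizontalCoframe verticalCoframe
  exact ⟨by linear_combination (norm := module) (1 / 2 : ℝ) • h₁, h₂⟩
end
end

section
/- The G₂ 3-form φ of gwistor space satisfies α ∧ φ = 0 and α₂ ∧ φ = 0. -/
/-!
The seven monomials of `φ` are indexed by the seven lines of a Fano plane on the points `0, …, 6`,
and the monomials of `α` and `α₂` are among them. Any two lines of a projective plane meet, so the
wedge of two such monomials repeats a basis 1-form and vanishes.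
-/

noncomputable section

open ExteriorAlgebra

theorem ιMulti_mul_ιMulti_eq_zero_of_eq {R M : Type*} [CommRing R] [AddCommGroup M]
    [Module R M] {m n : ℕ} {a : Fin m → M} {b : Fin n → M}
    {i : Fin m} {j : Fin n} (h : a i = b j) : ιMulti R m a * ιMulti R n b = 0 := by
  have h_repeat : Fin.append a b (Fin.castAdd n i) = Fin.append a b (Fin.natAdd m j) := by
    rw [Fin.append_left, Fin.append_right, h]
  have h_ne : Fin.castAdd n i ≠ Fin.natAdd m j :=
    Fin.ne_of_val_ne (i.isLt.trans_le (Nat.le_add_right m j)).ne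
  rw [ιMulti_mul_ιMulti]
  exact (ιMulti R (m + n)).map_eq_zero_of_eq _ h_repeat h_ne

theorem mul_eq_zero_of_mem_span {R A : Type*} [CommSemiring R] [NonUnitalNonAssocSemiring A]
    [Module R A] [SMulCommClass R A A] [IsScalarTower R A A] {S T : Set A}
    (hST : ∀ s ∈ S, ∀ t ∈ T, s * t = 0) {x y : A}
    (hx : x ∈ Submodule.span R S) (hy : y ∈ Submodule.span R T) : x * y = 0 :=
  LinearMap.BilinMap.apply_apply_mem_of_mem_span ⊥ S T (LinearMap.mul R A) hST x y hx hy

/-- The lines of the Fano plane underlying `φ`, on the points `0, …, 6`. The points of a line are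
listed in the order in which their basis 1-forms are multiplied in `α`, `μ ∧ β` or `α₂`. -/
def fanoLine : Fin 7 → Fin 3 → Fin 7 :=
  ![![4, 5, 6], ![0, 1, 4], ![0, 2, 5], ![0, 3, 6], ![1, 2, 6], ![2, 3, 4], ![3, 1, 5]]

theorem exists_fanoLine_eq_fanoLine (k l : Fin 7) : ∃ i j, fanoLine k i = fanoLine l j := by
  decide +revert

/-- The space of 3-forms spanned by the monomials `eⁱ∧eʲ∧eᵏ` indexed by the lines of the Fano
plane. Any two of its elements have wedge product zero, and it contains `α`, `α₂` and `φ`. -/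
def fanoForms : Submodule ℝ Ext7 :=
  Submodule.span ℝ (Set.range fun l => ιMulti ℝ 3 fun i => Pi.single (fanoLine l i) 1)

theorem mul_eq_zero_of_mem_fanoForms {x y : Ext7} (hx : x ∈ fanoForms) (hy : y ∈ fanoForms) :
    x * y = 0 := by
  refine mul_eq_zero_of_mem_span ?_ hx hy
  rintro _ ⟨k, rfl⟩ _ ⟨l, rfl⟩
  obtain ⟨i, j, h_meet⟩ := exists_fanoLine_eq_fanoLine k l
  exact ιMulti_mul_ιMulti_eq_zero_of_eq (i := i) (j := j) (by rw [h_meet])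

theorem e_fanoLine_mem_fanoForms (l : Fin 7) :
    e (fanoLine l 0) * e (fanoLine l 1) * e (fanoLine l 2) ∈ fanoForms :=
  Submodule.subset_span ⟨l, by simp [e, ιMulti_apply, -ιMulti_succ_apply, mul_assoc]⟩

theorem α_mem_fanoForms : α ∈ fanoForms :=
  e_fanoLine_mem_fanoForms 0

theorem μ_mul_β_mem_fanoForms : μ * β ∈ fanoForms := by
  rw [μ, β, mul_add, mul_add, ← mul_assoc, ← mul_assoc, ← mul_assoc]
  exact add_mem (add_mem (e_fanoLine_mem_fanoForms 1) (e_fanoLine_mem_fanoForms 2))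
    (e_fanoLine_mem_fanoForms 3)

theorem α₂_mem_fanoForms : α₂ ∈ fanoForms :=
  add_mem (add_mem (e_fanoLine_mem_fanoForms 4) (e_fanoLine_mem_fanoForms 5))
    (e_fanoLine_mem_fanoForms 6)

theorem φ_mem_fanoForms : φ ∈ fanoForms :=
  sub_mem (add_mem α_mem_fanoForms μ_mul_β_mem_fanoForms) α₂_mem_fanoForms

/-- `α ∧ φ = 0` and `α₂ ∧ φ = 0`. -/
theorem alpha_wedge_phi_vanish :
    α * φ = 0 ∧ α₂ * φ = 0 :=
  ⟨mul_eq_zero_of_mem_fanoForms α_mem_fanoForms φ_mem_fanoForms,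
    mul_eq_zero_of_mem_fanoForms α₂_mem_fanoForms φ_mem_fanoForms⟩
end
end
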